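/- A right artinian ring R is right self-injective if and only if φ(M) = 0 for every finitely generated right R-module M. -/

import Mathlib

open Module Function

universe u

variable (R : Type u) [Ring R]

/-- A finitely generated right `R`-module, encoded as a module over `Rᵐᵒᵖ`. -/
structure FGMod where
  carrier : Type u
  [isAddCommGroup : AddCommGroup carrier]
  [isModule : Module Rᵐᵒᵖ carrier]
  [isFinite : Module.Finite Rᵐᵒᵖ carrier]

attribute [instance] FGMod.isAddCommGroup FGMod.isModule FGMod.isFinite

instance : CoeSort (FGMod R) (Type u) := ⟨FGMod.carrier⟩

variable {R}

/-- Isomorphism of f.g. right modules. -/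
def FGMod.Iso (M N : FGMod R) : Prop := Nonempty (M ≃ₗ[Rᵐᵒᵖ] N)

/-- Direct sum. -/
def FGMod.prod (M N : FGMod R) : FGMod R := ⟨M × N⟩

/-- `M^k`, the direct sum of `k` copies of `M`. -/
def FGMod.pow (M : FGMod R) (k : ℕ) : FGMod R := ⟨Fin k → M⟩

/-- `N` is (isomorphic to) a direct summand of `M`. -/
def FGMod.IsSummand (N M : FGMod R) : Prop :=
  ∃ A B : Submodule Rᵐᵒᵖ M, IsCompl A B ∧ Nonempty (N ≃ₗ[Rᵐᵒᵖ] A)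

/-- `M` is indecomposable. -/
def FGMod.Indec (M : FGMod R) : Prop :=
  Nontrivial M ∧ ∀ A B : Submodule Rᵐᵒᵖ M, IsCompl A B → A = ⊥ ∨ B = ⊥

/-- `M` is projective. -/
def FGMod.Proj (M : FGMod R) : Prop := Module.Projective Rᵐᵒᵖ M

/-- `f : P → M` is a projective cover: `P` projective, `f` surjective with superfluous kernel. -/
def IsProjCover (M P : FGMod R) (f : P →ₗ[Rᵐᵒᵖ] M) : Prop :=
  P.Proj ∧ Surjective f ∧ ∀ N : Submodule Rᵐᵒᵖ P, N ⊔ LinearMap.ker f = ⊤ → N = ⊤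

/-- `N` is a (first) syzygy of `M`: the kernel of a projective cover of `M`. -/
def IsSyzygy (M N : FGMod R) : Prop :=
  ∃ (P : FGMod R) (f : P →ₗ[Rᵐᵒᵖ] M),
    IsProjCover M P f ∧ Nonempty (N ≃ₗ[Rᵐᵒᵖ] LinearMap.ker f)

/-- `N` is an `n`-th syzygy of `M`. -/
def IsSyzygyN : ℕ → FGMod R → FGMod R → Prop
  | 0, M, N => M.Iso N
  | n+1, M, N => ∃ L, IsSyzygy M L ∧ IsSyzygyN n L N

/-- `M` has projective dimension at most `n`. -/
def HasPdLE : ℕ → FGMod R → Prop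
  | 0, M => M.Proj
  | n+1, M => M.Proj ∨ ∃ N, IsSyzygy M N ∧ HasPdLE n N

/-- `M` has finite projective dimension. -/
def FinPd (M : FGMod R) : Prop := ∃ n, HasPdLE n M

/-- The projective dimension of `M` (junk value if infinite). -/
noncomputable def pdIT (M : FGMod R) : ℕ := sInf {n | HasPdLE n M}

variable (R)

/-- The Igusa–Todorov relations in the free abelian group on f.g. right modules:
`[A] - [B] - [C]` whenever `A ≅ B ⊕ C`, and `[P]` for `P` projective. -/
def ITRel : Set (FreeAbelianGroup (FGMod R)) :=
  {x | ∃ A B C : FGMod R, Nonempty (A ≃ₗ[Rᵐᵒᵖ] (B × C : Type u)) ∧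
        x = FreeAbelianGroup.of A - FreeAbelianGroup.of B - FreeAbelianGroup.of C} ∪
  {x | ∃ P : FGMod R, P.Proj ∧ x = FreeAbelianGroup.of P}

/-- The Igusa–Todorov group `K`. -/
def ITK := FreeAbelianGroup (FGMod R) ⧸ AddSubgroup.closure (ITRel R)

noncomputable instance : AddCommGroup (ITK R) :=
  QuotientAddGroup.Quotient.addCommGroup _

/-- The class `[M]` in `K`. -/
noncomputable def ITcls (M : FGMod R) : ITK R := QuotientAddGroup.mk (FreeAbelianGroup.of M)

/-- `⟨M⟩`: the subgroup of `K` generated by the indecomposable non-projective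
direct summands of `M`. -/
noncomputable def ITgen (M : FGMod R) : AddSubgroup (ITK R) :=
  AddSubgroup.closure
    {x | ∃ N : FGMod R, N.IsSummand M ∧ N.Indec ∧ ¬N.Proj ∧ x = ITcls R N}

/-- The rank of a subgroup of `K`. -/
noncomputable def rkIT (H : AddSubgroup (ITK R)) : ℕ :=
  Module.finrank ℤ (AddSubgroup.toIntSubmodule H)

/-- `OmK` is a syzygy endomorphism of `K`: a group endomorphism sending `[M]` to `[ΩM]`. -/
def IsSyzygyEnd (OmK : AddMonoid.End (ITK R)) : Prop :=
  ∀ M N : FGMod R, IsSyzygy M N → OmK (ITcls R M) = ITcls R N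

/-- The Igusa–Todorov function `φ`: the least `n` such that the rank of
`Ω^i⟨M⟩` equals that of `Ω^n⟨M⟩` for all `i ≥ n`. -/
noncomputable def phiIT (OmK : AddMonoid.End (ITK R)) (M : FGMod R) : ℕ :=
  sInf {n | ∀ i, n ≤ i →
    rkIT R ((ITgen R M).map ((OmK ^ i : AddMonoid.End (ITK R)) : ITK R →+ ITK R))
      = rkIT R ((ITgen R M).map ((OmK ^ n : AddMonoid.End (ITK R)) : ITK R →+ ITK R))}

/-- The second Igusa–Todorov function `ψ`. -/
noncomputable def psiIT (OmK : AddMonoid.End (ITK R)) (M : FGMod R) : ℕ :=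
  phiIT R OmK M + sSup {d | ∃ N X : FGMod R, IsSyzygyN (phiIT R OmK M) M N ∧
      X.IsSummand N ∧ FinPd X ∧ d = pdIT X}

/-- The socle of a module: the sum of its simple submodules. -/
def socleIT (M : FGMod R) : Submodule Rᵐᵒᵖ M :=
  sSup {S : Submodule Rᵐᵒᵖ M | IsSimpleModule Rᵐᵒᵖ S}

/-!
If `R` is right self-injective, projectives are injective, so a map from `M` into a projective
with smallest possible kernel has a cokernel which is well defined in `K`. This cosyzygy operation
is a left inverse of `Ω`; hence `Ω` is injective on `K`, preserves ranks, and `φ = 0`.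

Conversely, if `R` is not right self-injective, Baer's criterion along a chain of right ideals
yields a non-split extension `0 → R → E → T → 0` with `T` simple. A projective presentation of `T`
lifted to `E` shows `Ω[E] = Ω[T]`. If `φ(E ⊕ T) = 0` then `Ω` preserves the rank of `⟨E ⊕ T⟩`, so
`[E] - [T]` is torsion and every homomorphism `K → ℤ` takes the same value on `[E]` and `[T]`. Each
additive invariant `l` defines such a homomorphism, `[M] ↦ l(P(M)) - l(M)` with `P(M)` the
projective cover. For the length it gives `P(E) ≅ R ⊕ P(T)`, and then for the length of the socle
`ℓ(soc E) = ℓ(soc R) + 1`, while a non-split extension of a simple module has `soc E = soc R`.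
-/

section Injective

variable {S : Type u} [Ring S]
variable {A I J M N P : Type u}
variable [AddCommGroup A] [AddCommGroup I] [AddCommGroup J] [AddCommGroup M] [AddCommGroup N]
  [AddCommGroup P]
variable [Module S A] [Module S I] [Module S J] [Module S M] [Module S N] [Module S P]

lemma injective_of_retract [Module.Injective S I] (i : J →ₗ[S] I) (r : I →ₗ[S] J)
    (hri : r ∘ₗ i = LinearMap.id) : Module.Injective S J where
  out X Y _ _ _ _ f hf g := by
    obtain ⟨h, hh⟩ := Module.Injective.extension_property S I X Y f hf (i ∘ₗ g)
    have hg : (r ∘ₗ h) ∘ₗ f = g := by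
      rw [LinearMap.comp_assoc, hh, ← LinearMap.comp_assoc, hri, LinearMap.id_comp]
    exact ⟨r ∘ₗ h, LinearMap.congr_fun hg⟩

lemma injective_of_projective_of_finite [Module.Injective S S] [Module.Finite S P]
    [Module.Projective S P] : Module.Injective S P := by
  obtain ⟨n, f, hf⟩ := Module.Finite.exists_fin' S P
  obtain ⟨s, hs⟩ := Module.projective_lifting_property f LinearMap.id hf
  exact injective_of_retract (I := Fin n → S) s f hs

lemma exists_comp_eq_of_ker_le [Module.Injective S J] (e : M →ₗ[S] I) (g : M →ₗ[S] J)
    (h : LinearMap.ker e ≤ LinearMap.ker g) : ∃ a : I →ₗ[S] J, a ∘ₗ e = g := by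
  obtain ⟨a, ha⟩ := Module.Injective.extension_property S J _ _
    ((LinearMap.ker e).liftQ e le_rfl)
    (LinearMap.ker_eq_bot.mp (Submodule.ker_liftQ_eq_bot' _ _ rfl)) ((LinearMap.ker e).liftQ g h)
  exact ⟨a, LinearMap.ext fun x => LinearMap.congr_fun ha (Submodule.Quotient.mk x)⟩

variable (S) in
/-- Every extension `0 → A → E → T → 0` splits: the vanishing of `Ext¹(T, A)`, expressed without
derived functors. -/
def ExtensionsSplit (T A : Type u) [AddCommGroup T] [Module S T] [AddCommGroup A] [Module S A] :
    Prop :=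
  ∀ (E : Type u) [AddCommGroup E] [Module S E] (i : A →ₗ[S] E) (p : E →ₗ[S] T),
    Injective i → Surjective p → Exact i p → ∃ s : T →ₗ[S] E, p ∘ₗ s = LinearMap.id

/-- The pushout of `g : M → A` and `j : M → N`. -/
abbrev Pushout (g : M →ₗ[S] A) (j : M →ₗ[S] N) : Type u :=
  (A × N) ⧸ LinearMap.range (g.prod (-j))

namespace Pushout

variable (g : M →ₗ[S] A) (j : M →ₗ[S] N)

/-- The structure map `A → Pushout g j`. -/
def inl : A →ₗ[S] Pushout g j := Submodule.mkQ _ ∘ₗ LinearMap.inl S A N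

/-- The structure map `N → Pushout g j`. -/
def inr : N →ₗ[S] Pushout g j := Submodule.mkQ _ ∘ₗ LinearMap.inr S A N

/-- The map from the pushout onto the cokernel of `j`, zero on `A`. -/
def toCoker : Pushout g j →ₗ[S] N ⧸ LinearMap.range j :=
  Submodule.liftQ _ (Submodule.mkQ _ ∘ₗ LinearMap.snd S A N) <| by
    rintro _ ⟨m, rfl⟩
    simp

lemma inr_comp : inr g j ∘ₗ j = inl g j ∘ₗ g := by
  ext m
  refine (Submodule.Quotient.eq _).mpr ⟨-m, ?_⟩
  simp

variable {j} in
lemma inl_injective (hj : Injective j) : Injective (inl g j) := by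
  rw [injective_iff_map_eq_zero]
  intro a ha
  obtain ⟨m, hm⟩ := (Submodule.Quotient.mk_eq_zero _).mp ha
  obtain ⟨rfl, hjm⟩ : g m = a ∧ j m = 0 := by simpa using hm
  rw [(map_eq_zero_iff j hj).mp hjm, map_zero]

lemma toCoker_surjective : Surjective (toCoker g j) := by
  rintro ⟨y⟩
  exact ⟨inr g j y, rfl⟩

lemma exact_inl_toCoker : Exact (inl g j) (toCoker g j) := by
  rintro ⟨a, y⟩
  constructor
  · intro hy
    obtain ⟨m, rfl⟩ := (Submodule.Quotient.mk_eq_zero _).mp hy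
    refine ⟨a + g m, (Submodule.Quotient.eq _).mpr ⟨m, ?_⟩⟩
    simp
  · rintro ⟨b, hb⟩
    rw [← hb]
    exact (Submodule.Quotient.mk_eq_zero _).mpr (zero_mem _)

end Pushout

lemma ExtensionsSplit.exists_comp_eq {j : M →ₗ[S] N}
    (hsplit : ExtensionsSplit S (N ⧸ LinearMap.range j) A) (hj : Injective j) (g : M →ₗ[S] A) :
    ∃ h : N →ₗ[S] A, h ∘ₗ j = g := by
  have hinj := Pushout.inl_injective g hj
  have hsurj := Pushout.toCoker_surjective g j
  have hexact := Pushout.exact_inl_toCoker g j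
  obtain ⟨r, hr⟩ := ((hexact.split_tfae hinj hsurj).out 0 1).mp (hsplit _ _ _ hinj hsurj hexact)
  refine ⟨r ∘ₗ Pushout.inr g j, ?_⟩
  rw [LinearMap.comp_assoc, Pushout.inr_comp, ← LinearMap.comp_assoc, hr, LinearMap.id_comp]

lemma injective_of_extensionsSplit_simple [IsArtinianRing S]
    (h : ∀ (T : Type u) [AddCommGroup T] [Module S T] [IsSimpleModule S T],
      ExtensionsSplit S T A) : Module.Injective S A := by
  refine Module.Baer.injective fun I => ?_
  induction I using IsNoetherian.induction with
  | hgt I ih =>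
    intro g
    obtain rfl | hI := eq_or_ne I ⊤
    · exact ⟨g ∘ₗ Submodule.topEquiv.symm.toLinearMap, fun _ _ => rfl⟩
    obtain ⟨L, hIL, -⟩ := exists_covBy_le_of_lt hI.lt_top
    have hsimple : IsSimpleModule S (L ⧸ LinearMap.range (Submodule.inclusion hIL.le)) := by
      rw [Submodule.range_inclusion]
      exact (covBy_iff_quot_is_simple hIL.le).mp hIL
    obtain ⟨g', hg'⟩ := (h _).exists_comp_eq (Submodule.inclusion_injective hIL.le) g
    obtain ⟨k, hk⟩ := ih L hIL.lt g'
    refine ⟨k, fun x hx => ?_⟩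
    rw [hk x (hIL.le hx), ← hg']
    rfl

end Injective

section Length

variable {S : Type*} [Ring S] {M N : Type*} [AddCommGroup M] [AddCommGroup N] [Module S M]
  [Module S N]

lemma length_submodule_prod (p : Submodule S M) (q : Submodule S N) :
    Module.length S (p.prod q) = Module.length S p + Module.length S q := by
  have hinj : Injective (p.subtype.prodMap q.subtype) :=
    p.subtype_injective.prodMap q.subtype_injective
  have e := LinearEquiv.ofInjective _ hinj
  rw [LinearMap.range_prodMap, Submodule.range_subtype, Submodule.range_subtype] at e
  rw [← e.length_eq, Module.length_prod]

lemma surjective_of_injective_of_length_le [IsArtinian S N] [IsNoetherian S N] {f : M →ₗ[S] N}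
    (hf : Injective f) (hle : Module.length S N ≤ Module.length S M) : Surjective f := by
  rw [← LinearMap.range_eq_top]
  by_contra hne
  rw [(LinearEquiv.ofInjective f hf).length_eq] at hle
  exact (Submodule.length_lt hne).not_ge hle

end Length

section Socle

variable {R} {A E M N T : FGMod R}

lemma map_socleIT_le (f : M →ₗ[Rᵐᵒᵖ] N) : (socleIT R M).map f ≤ socleIT R N := by
  rw [Submodule.map_le_iff_le_comap]
  refine sSup_le fun U (hU : IsSimpleModule Rᵐᵒᵖ U) => Submodule.map_le_iff_le_comap.mp ?_
  rw [← U.range_subtype, ← LinearMap.range_comp]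
  obtain hinj | hzero := LinearMap.injective_or_eq_zero (f ∘ₗ U.subtype)
  · exact le_sSup (IsSimpleModule.congr (LinearEquiv.ofInjective _ hinj).symm)
  · rw [hzero, LinearMap.range_zero]
    exact bot_le

lemma map_equiv_socleIT (e : M ≃ₗ[Rᵐᵒᵖ] N) :
    (socleIT R M).map (e : M →ₗ[Rᵐᵒᵖ] N) = socleIT R N := by
  refine le_antisymm (map_socleIT_le _) ?_
  rw [Submodule.map_equiv_eq_comap_symm, ← Submodule.map_le_iff_le_comap]
  exact map_socleIT_le _

lemma socleIT_prod : socleIT R (M.prod N) = (socleIT R M).prod (socleIT R N) :=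
  le_antisymm
    ((Submodule.le_prod_iff Rᵐᵒᵖ M N).mpr
      ⟨map_socleIT_le (M := M.prod N) (LinearMap.fst Rᵐᵒᵖ M N),
        map_socleIT_le (M := M.prod N) (LinearMap.snd Rᵐᵒᵖ M N)⟩)
    ((Submodule.prod_le_iff Rᵐᵒᵖ M N).mpr
      ⟨map_socleIT_le (N := M.prod N) (LinearMap.inl Rᵐᵒᵖ M N),
        map_socleIT_le (N := M.prod N) (LinearMap.inr Rᵐᵒᵖ M N)⟩)

lemma length_socleIT_of_equiv_prod (e : A ≃ₗ[Rᵐᵒᵖ] (M × N : Type u)) :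
    Module.length Rᵐᵒᵖ (socleIT R A)
      = Module.length Rᵐᵒᵖ (socleIT R M) + Module.length Rᵐᵒᵖ (socleIT R N) := by
  have hmap := map_equiv_socleIT (N := M.prod N) e
  rw [(e.submoduleMap (socleIT R A)).length_eq, ← length_submodule_prod, ← socleIT_prod]
  exact congrArg (fun U : Submodule Rᵐᵒᵖ (M.prod N) => Module.length Rᵐᵒᵖ U) hmap

lemma socleIT_eq_top_of_isSimpleModule [IsSimpleModule Rᵐᵒᵖ T] : socleIT R T = ⊤ :=
  top_le_iff.mp (le_sSup (IsSimpleModule.congr Submodule.topEquiv))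

lemma socleIT_le_map_of_not_split [IsSimpleModule Rᵐᵒᵖ T] {i : A →ₗ[Rᵐᵒᵖ] E} {p : E →ₗ[Rᵐᵒᵖ] T}
    (hi : Injective i) (hip : Exact i p) (hsplit : ¬∃ s : T →ₗ[Rᵐᵒᵖ] E, p ∘ₗ s = LinearMap.id) :
    socleIT R E ≤ (socleIT R A).map i := by
  refine sSup_le fun U (hU : IsSimpleModule Rᵐᵒᵖ U) => ?_
  obtain hbij | hzero := LinearMap.bijective_or_eq_zero (p ∘ₗ U.subtype)
  · let e := LinearEquiv.ofBijective _ hbij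
    exact absurd ⟨U.subtype ∘ₗ e.symm.toLinearMap, LinearMap.ext e.apply_symm_apply⟩ hsplit
  · have hU_range : U ≤ LinearMap.range i := fun x hx =>
      (hip x).mp (LinearMap.congr_fun hzero ⟨x, hx⟩)
    have e := Submodule.equivMapOfInjective i hi (U.comap i)
    rw [Submodule.map_comap_eq_of_le hU_range] at e
    rw [← Submodule.map_comap_eq_of_le hU_range]
    exact Submodule.map_mono (le_sSup (IsSimpleModule.congr e))

end Socle

namespace FGMod

section Additive

variable {R}

/-- The object of `FGMod R` underlying a finitely generated right module. -/
abbrev of (X : Type u) [AddCommGroup X] [Module Rᵐᵒᵖ X] [Module.Finite Rᵐᵒᵖ X] : FGMod R := ⟨X⟩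

/-- An invariant of modules that is additive on direct sums, hence also isomorphism invariant. -/
def IsAdditive {G : Type*} [Add G] (l : FGMod R → G) : Prop :=
  ∀ ⦃A B C : FGMod R⦄, (A ≃ₗ[Rᵐᵒᵖ] (B × C : Type u)) → l A = l B + l C

lemma IsAdditive.congr {G : Type*} [Add G] {l : FGMod R → G} (hl : IsAdditive l) {M N : FGMod R}
    (e : M ≃ₗ[Rᵐᵒᵖ] N) : l M = l N := by
  have f : N ≃ₗ[Rᵐᵒᵖ] N × (of PUnit.{u + 1} : FGMod R) := LinearEquiv.prodUnique.symm
  rw [hl (e.trans f), ← hl f]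

/-- The length of a module over an artinian ring, as a natural number. -/
noncomputable def length (M : FGMod R) : ℕ := (Module.length Rᵐᵒᵖ M).toNat

/-- The length of the socle of a module over an artinian ring, as a natural number. -/
noncomputable def socleLength (M : FGMod R) : ℕ := (Module.length Rᵐᵒᵖ (socleIT R M)).toNat

lemma socleLength_eq_one {T : FGMod R} [IsSimpleModule Rᵐᵒᵖ T] : T.socleLength = 1 := by
  rw [socleLength, socleIT_eq_top_of_isSimpleModule, Module.length_top, Module.length_eq_one]
  rfl

variable [IsArtinianRing Rᵐᵒᵖ]

lemma coe_length (M : FGMod R) : (M.length : ℕ∞) = Module.length Rᵐᵒᵖ M :=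
  ENat.natCast_toNat Module.length_ne_top

lemma length_lt {M : FGMod R} {U : Submodule Rᵐᵒᵖ M} (hU : U ≠ ⊤) :
    (of (R := R) U).length < M.length := by
  rw [← Nat.cast_lt (α := ℕ∞), coe_length, coe_length]
  exact Submodule.length_lt hU

lemma coe_socleLength (M : FGMod R) : (M.socleLength : ℕ∞) = Module.length Rᵐᵒᵖ (socleIT R M) :=
  ENat.natCast_toNat Module.length_ne_top

lemma isAdditive_length : IsAdditive (length (R := R)) := fun A B C e => by
  have h := e.length_eq
  rw [Module.length_prod, ← coe_length, ← coe_length, ← coe_length] at h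
  exact_mod_cast h

lemma isAdditive_socleLength : IsAdditive (socleLength (R := R)) := fun A B C e => by
  have h := length_socleIT_of_equiv_prod e
  rw [← coe_socleLength, ← coe_socleLength, ← coe_socleLength] at h
  exact_mod_cast h

variable {A E T : FGMod R}

lemma length_eq_add_of_exact {i : A →ₗ[Rᵐᵒᵖ] E} {p : E →ₗ[Rᵐᵒᵖ] T} (hi : Injective i)
    (hp : Surjective p) (hip : Exact i p) : E.length = A.length + T.length := by
  have h := Module.length_eq_add_of_exact i p hi hp hip
  rw [← coe_length, ← coe_length, ← coe_length] at h
  exact_mod_cast h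

lemma socleLength_le_of_not_split [IsSimpleModule Rᵐᵒᵖ T] {i : A →ₗ[Rᵐᵒᵖ] E}
    {p : E →ₗ[Rᵐᵒᵖ] T} (hi : Injective i) (hip : Exact i p)
    (hsplit : ¬∃ s : T →ₗ[Rᵐᵒᵖ] E, p ∘ₗ s = LinearMap.id) : E.socleLength ≤ A.socleLength := by
  have hle := Module.length_le_of_injective _
    (Submodule.inclusion_injective (socleIT_le_map_of_not_split hi hip hsplit))
  rw [← (Submodule.equivMapOfInjective i hi (socleIT R A)).length_eq] at hle
  rw [← coe_socleLength, ← coe_socleLength] at hle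
  exact_mod_cast hle

end Additive

end FGMod

section Superfluous

variable {S : Type*} [Ring S] {P Q : Type*} [AddCommGroup P] [AddCommGroup Q] [Module S P]
  [Module S Q]

/-- A superfluous (or small) submodule: the condition on the kernel of a projective cover. -/
def IsSuperfluous (K : Submodule S P) : Prop :=
  ∀ N : Submodule S P, N ⊔ K = ⊤ → N = ⊤

namespace IsSuperfluous

lemma bot : IsSuperfluous (⊥ : Submodule S P) := fun N hN => by rwa [sup_bot_eq] at hN

lemma sup {K L : Submodule S P} (hK : IsSuperfluous K) (hL : IsSuperfluous L) :
    IsSuperfluous (K ⊔ L) :=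
  fun N hN => hK N (hL _ (by rwa [sup_assoc]))

lemma map {K : Submodule S P} (hK : IsSuperfluous K) (g : P →ₗ[S] Q) :
    IsSuperfluous (K.map g) := fun N hN => by
  have hcomap : N.comap g ⊔ K = ⊤ := by
    refine eq_top_iff.mpr fun x _ => ?_
    obtain ⟨n, hn, _, ⟨k, hk, rfl⟩, hx⟩ :=
      Submodule.mem_sup.mp (hN ▸ Submodule.mem_top : g x ∈ N ⊔ K.map g)
    refine Submodule.mem_sup.mpr ⟨x - k, ?_, k, hk, sub_add_cancel x k⟩
    rwa [Submodule.mem_comap, map_sub, ← hx, add_sub_cancel_right]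
  have hle : K.map g ≤ N := by
    rw [Submodule.map_le_iff_le_comap, hK _ hcomap]
    exact le_top
  rwa [sup_eq_left.mpr hle] at hN

lemma prod {K : Submodule S P} {L : Submodule S Q} (hK : IsSuperfluous K)
    (hL : IsSuperfluous L) : IsSuperfluous (K.prod L) := by
  rw [LinearMap.prod_eq_sup_map]
  exact (hK.map _).sup (hL.map _)

end IsSuperfluous

lemma surjective_comp_iff_range_sup_ker {M : Type*} [AddCommGroup M] [Module S M]
    {f : P →ₗ[S] M} (hf : Surjective f) (h : Q →ₗ[S] P) :
    Surjective (f ∘ₗ h) ↔ LinearMap.range h ⊔ LinearMap.ker f = ⊤ := by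
  rw [← LinearMap.range_eq_top, LinearMap.range_comp,
    LinearMap.map_eq_top_iff (LinearMap.range_eq_top.mpr hf)]

/-- Fitting's lemma for an endomorphism `g` of `P` over `M` with image in `N` produces the
summand. -/
lemma exists_projective_submodule_le [IsArtinian S P] [IsNoetherian S P] [Module.Projective S P]
    {M : Type*} [AddCommGroup M] [Module S M] {f : P →ₗ[S] M} (hf : Surjective f)
    {N : Submodule S P} (hN : N ⊔ LinearMap.ker f = ⊤) :
    ∃ Q ≤ N, Module.Projective S Q ∧ Surjective (f ∘ₗ Q.subtype) := by
  have hfN : Surjective (f ∘ₗ N.subtype) := by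
    rwa [surjective_comp_iff_range_sup_ker hf, Submodule.range_subtype]
  obtain ⟨g₀, hg₀⟩ := Module.projective_lifting_property _ f hfN
  let g : Module.End S P := N.subtype ∘ₗ g₀
  have hfg (n : ℕ) (x : P) : f ((g ^ n) x) = f x := by
    induction n with
    | zero => rfl
    | succ n ih =>
      rw [pow_succ', Module.End.mul_apply, ← ih]
      exact LinearMap.congr_fun hg₀ _
  obtain ⟨n, hn⟩ := Filter.eventually_atTop.mp (LinearMap.eventually_isCompl_ker_pow_range_pow g)
  have hcompl := hn (n + 1) n.le_succ
  refine ⟨LinearMap.range (g ^ (n + 1)), ?_, ?_, fun m => ?_⟩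
  · rintro _ ⟨x, rfl⟩
    rw [pow_succ', Module.End.mul_apply]
    exact (g₀ _).2
  · exact Module.Projective.of_split (Submodule.subtype _)
      (Submodule.projectionOnto _ _ hcompl.symm) (Submodule.projectionOnto_comp_subtype hcompl.symm)
  · obtain ⟨x, rfl⟩ := hf m
    exact ⟨⟨_, x, rfl⟩, hfg (n + 1) x⟩

end Superfluous

namespace IsProjCover

section General

variable {R} {M N P Q : FGMod R}

lemma id (hP : P.Proj) : IsProjCover P P LinearMap.id :=
  ⟨hP, surjective_id, by rw [LinearMap.ker_id]; exact IsSuperfluous.bot⟩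

lemma prod {f : P →ₗ[Rᵐᵒᵖ] M} {g : Q →ₗ[Rᵐᵒᵖ] N} (hf : IsProjCover M P f)
    (hg : IsProjCover N Q g) :
    IsProjCover (M.prod N) (P.prod Q) (f.prodMap g) := by
  have hP : Module.Projective Rᵐᵒᵖ P := hf.1
  have hQ : Module.Projective Rᵐᵒᵖ Q := hg.1
  refine ⟨inferInstanceAs (Module.Projective Rᵐᵒᵖ (P × Q)), hf.2.1.prodMap hg.2.1, ?_⟩
  have h := IsSuperfluous.prod hf.2.2 hg.2.2
  rwa [← LinearMap.ker_prodMap] at h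

lemma comp_equiv {f : P →ₗ[Rᵐᵒᵖ] M} (hf : IsProjCover M P f) (e : M ≃ₗ[Rᵐᵒᵖ] N) :
    IsProjCover N P (e.toLinearMap ∘ₗ f) :=
  ⟨hf.1, e.surjective.comp hf.2.1, by simpa only [LinearEquiv.ker_comp] using hf.2.2⟩

lemma exists_retraction {c : P →ₗ[Rᵐᵒᵖ] M} (hc : IsProjCover M P c) (hQ : Q.Proj)
    {f : Q →ₗ[Rᵐᵒᵖ] M} (hf : Surjective f) :
    ∃ (r : Q →ₗ[Rᵐᵒᵖ] P) (s : P →ₗ[Rᵐᵒᵖ] Q), c ∘ₗ r = f ∧ r ∘ₗ s = LinearMap.id := by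
  have hQ' : Module.Projective Rᵐᵒᵖ Q := hQ
  have hP' : Module.Projective Rᵐᵒᵖ P := hc.1
  obtain ⟨r, rfl⟩ := Module.projective_lifting_property c f hc.2.1
  have hr : Surjective r := LinearMap.range_eq_top.mp
    (hc.2.2 _ ((surjective_comp_iff_range_sup_ker hc.2.1 r).mp hf))
  obtain ⟨s, hs⟩ := Module.projective_lifting_property r LinearMap.id hr
  exact ⟨r, s, rfl, hs⟩

lemma nonempty_equiv {f : P →ₗ[Rᵐᵒᵖ] M} {g : Q →ₗ[Rᵐᵒᵖ] M} (hf : IsProjCover M P f)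
    (hg : IsProjCover M Q g) : Nonempty (P ≃ₗ[Rᵐᵒᵖ] Q) := by
  obtain ⟨r, s, rfl, hrs⟩ := hf.exists_retraction hg.1 hg.2.1
  have hs : Surjective s := by
    refine LinearMap.range_eq_top.mp (hg.2.2 _ ?_)
    rw [← surjective_comp_iff_range_sup_ker hg.2.1, LinearMap.comp_assoc, hrs]
    exact hf.2.1
  exact ⟨LinearEquiv.ofBijective s ⟨LeftInverse.injective (LinearMap.congr_fun hrs), hs⟩⟩

end General

section Artinian

variable {R} [IsArtinianRing Rᵐᵒᵖ] {M P : FGMod R}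

lemma exists_of_surjective (hP : P.Proj) {f : P →ₗ[Rᵐᵒᵖ] M} (hf : Surjective f) :
    ∃ (Q : FGMod R) (g : Q →ₗ[Rᵐᵒᵖ] M), IsProjCover M Q g := by
  induction hn : P.length using Nat.strong_induction_on generalizing P with
  | _ n ih =>
    by_cases hker : IsSuperfluous (LinearMap.ker f)
    · exact ⟨P, f, hP, hf, hker⟩
    have hP' : Module.Projective Rᵐᵒᵖ P := hP
    obtain ⟨N, hN, hN_ne⟩ : ∃ N : Submodule Rᵐᵒᵖ P, N ⊔ LinearMap.ker f = ⊤ ∧ N ≠ ⊤ := by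
      simpa only [IsSuperfluous, not_forall, exists_prop] using hker
    obtain ⟨Q, hQN, hQ, hQf⟩ := exists_projective_submodule_le hf hN
    exact ih (P := .of Q) _ (hn ▸ FGMod.length_lt (ne_top_of_le_ne_top hN_ne hQN)) hQ hQf rfl

variable (M) in
lemma exists_cover : ∃ (P : FGMod R) (f : P →ₗ[Rᵐᵒᵖ] M), IsProjCover M P f := by
  obtain ⟨n, f, hf⟩ := Module.Finite.exists_fin' Rᵐᵒᵖ M
  exact exists_of_surjective (P := .of (Fin n → Rᵐᵒᵖ))
    (inferInstanceAs (Module.Projective Rᵐᵒᵖ (Fin n → Rᵐᵒᵖ))) hf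

end Artinian

end IsProjCover

section Horseshoe

variable {S : Type*} [Ring S] {A E T Q : Type*} [AddCommGroup A] [AddCommGroup E]
  [AddCommGroup T] [AddCommGroup Q] [Module S A] [Module S E] [Module S T] [Module S Q]
  {i : A →ₗ[S] E} {p : E →ₗ[S] T}

lemma coprod_surjective_of_exact (hip : Exact i p) {g : Q →ₗ[S] E} (hg : Surjective (p ∘ₗ g)) :
    Surjective (i.coprod g) := fun x => by
  obtain ⟨q, hq⟩ := hg (p x)
  obtain ⟨a, ha⟩ := (hip (x - g q)).mp (by rw [map_sub, ← hq, LinearMap.comp_apply, sub_self])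
  exact ⟨(a, q), by rw [LinearMap.coprod_apply, ha, sub_add_cancel]⟩

lemma nonempty_ker_coprod_equiv_ker_comp (hi : Injective i) (hip : Exact i p) (g : Q →ₗ[S] E) :
    Nonempty (LinearMap.ker (i.coprod g) ≃ₗ[S] LinearMap.ker (p ∘ₗ g)) := by
  have hmaps : ∀ x ∈ LinearMap.ker (i.coprod g),
      LinearMap.snd S A Q x ∈ LinearMap.ker (p ∘ₗ g) := fun x hx => by
    have h := congrArg p (LinearMap.mem_ker.mp hx)
    rwa [LinearMap.coprod_apply, map_add, hip.apply_apply_eq_zero, zero_add, map_zero] at h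
  refine ⟨LinearEquiv.ofBijective ((LinearMap.snd S A Q).restrict hmaps) ⟨?_, ?_⟩⟩
  · rw [injective_iff_map_eq_zero]
    rintro ⟨⟨a, q⟩, haq⟩ hq
    obtain rfl : q = 0 := congrArg Subtype.val hq
    have ha : i a = 0 := by simpa using haq
    simpa using (map_eq_zero_iff i hi).mp ha
  · rintro ⟨q, hq⟩
    obtain ⟨a, ha⟩ := (hip (g q)).mp hq
    refine ⟨⟨(-a, q), ?_⟩, rfl⟩
    rw [LinearMap.mem_ker, LinearMap.coprod_apply, map_neg, ha, neg_add_cancel]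

end Horseshoe

section IgusaTodorovGroup

variable {R}

lemma FGMod.IsAdditive.eq_add_of_split {G : Type*} [Add G] {l : FGMod R → G}
    (hl : FGMod.IsAdditive l) {A E T : FGMod R} {i : A →ₗ[Rᵐᵒᵖ] E} {p : E →ₗ[Rᵐᵒᵖ] T}
    (hi : Injective i) (hip : Exact i p) {s : T →ₗ[Rᵐᵒᵖ] E} (hs : p ∘ₗ s = LinearMap.id) :
    l E = l A + l T :=
  hl (hip.splitSurjectiveEquiv hi ⟨s, hs⟩).1

lemma isAdditive_ITcls : FGMod.IsAdditive (ITcls R) := fun A B C e => by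
  have hrel : FreeAbelianGroup.of A - FreeAbelianGroup.of B - FreeAbelianGroup.of C ∈
      AddSubgroup.closure (ITRel R) :=
    AddSubgroup.subset_closure (Or.inl ⟨A, B, C, ⟨e⟩, rfl⟩)
  have hzero : ITcls R A - ITcls R B - ITcls R C = 0 :=
    (QuotientAddGroup.eq_zero_iff (N := AddSubgroup.closure (ITRel R)) _).mpr hrel
  rwa [sub_sub, sub_eq_zero] at hzero

lemma ITcls_eq_zero_of_proj {P : FGMod R} (hP : P.Proj) : ITcls R P = 0 :=
  (QuotientAddGroup.eq_zero_iff (N := AddSubgroup.closure (ITRel R)) _).mpr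
    (AddSubgroup.subset_closure (Or.inr ⟨P, hP, rfl⟩))

lemma ITcls_eq_zero_of_subsingleton (M : FGMod R) [Subsingleton M] : ITcls R M = 0 :=
  ITcls_eq_zero_of_proj (Module.Projective.of_free (P := M))

lemma ITK.hom_ext {G : Type*} [AddCommGroup G] {f g : ITK R →+ G}
    (h : ∀ M, f (ITcls R M) = g (ITcls R M)) : f = g :=
  QuotientAddGroup.addMonoidHom_ext _ (FreeAbelianGroup.lift_ext _ _ h)

/-- A homomorphism out of `K` may be prescribed by a relation, so that no choice of auxiliary
data (covers, approximations) enters the value. -/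
lemma ITK.exists_hom_of_relation {G : Type*} [AddCommGroup G] {r : FGMod R → G → Prop}
    (total : ∀ M, ∃ x, r M x) (unique : ∀ ⦃M x y⦄, r M x → r M y → x = y)
    (add : ∀ ⦃A B C : FGMod R⦄ ⦃x y : G⦄,
      (A ≃ₗ[Rᵐᵒᵖ] (B × C : Type u)) → r B x → r C y → r A (x + y))
    (proj : ∀ ⦃P : FGMod R⦄, P.Proj → r P 0) :
    ∃ F : ITK R →+ G, ∀ ⦃M x⦄, r M x → F (ITcls R M) = x := by
  choose f hf using total
  have hle : AddSubgroup.closure (ITRel R) ≤ (FreeAbelianGroup.lift f).ker := by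
    rw [AddSubgroup.closure_le]
    rintro x (⟨A, B, C, ⟨e⟩, rfl⟩ | ⟨P, hP, rfl⟩)
    · rw [SetLike.mem_coe, AddMonoidHom.mem_ker, map_sub, map_sub, sub_sub, sub_eq_zero]
      simpa only [FreeAbelianGroup.lift_apply_of] using unique (hf A) (add e (hf B) (hf C))
    · rw [SetLike.mem_coe, AddMonoidHom.mem_ker, FreeAbelianGroup.lift_apply_of]
      exact unique (hf P) (proj hP)
  refine ⟨QuotientAddGroup.lift _ (FreeAbelianGroup.lift f) hle, fun M x hx => ?_⟩
  exact (FreeAbelianGroup.lift_apply_of f M).trans (unique (hf M) hx)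

end IgusaTodorovGroup

section Syzygy

variable {R} {OmK : AddMonoid.End (ITK R)} {A E M P T : FGMod R}

lemma IsProjCover.ITcls_ker_eq [IsNoetherianRing Rᵐᵒᵖ] {Q : FGMod R} {c : Q →ₗ[Rᵐᵒᵖ] M}
    (hc : IsProjCover M Q c) (hP : P.Proj) {f : P →ₗ[Rᵐᵒᵖ] M} (hf : Surjective f) :
    ITcls R (.of (LinearMap.ker f)) = ITcls R (.of (LinearMap.ker c)) := by
  obtain ⟨r, s, rfl, hrs⟩ := hc.exists_retraction hP hf
  have hP_split := isAdditive_ITcls.eq_add_of_split (A := .of (LinearMap.ker r))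
    (LinearMap.ker r).subtype_injective (LinearMap.exact_subtype_ker_map r) hrs
  rw [ITcls_eq_zero_of_proj hP, ITcls_eq_zero_of_proj hc.1, add_zero] at hP_split
  let r' : LinearMap.ker (c ∘ₗ r) →ₗ[Rᵐᵒᵖ] LinearMap.ker c := r.restrict fun _ hx => hx
  let s' : LinearMap.ker c →ₗ[Rᵐᵒᵖ] LinearMap.ker (c ∘ₗ r) := s.restrict fun x hx => by
    rwa [LinearMap.mem_ker, LinearMap.comp_apply, ← LinearMap.comp_apply r s, hrs]
  have hrs' : r' ∘ₗ s' = LinearMap.id :=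
    LinearMap.ext fun x => Subtype.ext (LinearMap.congr_fun hrs x)
  have hexact : Exact (Submodule.inclusion (LinearMap.ker_le_ker_comp r c)) r' := fun x =>
    ⟨fun hx => ⟨⟨x, congrArg Subtype.val hx⟩, rfl⟩, fun ⟨y, hy⟩ => hy ▸ Subtype.ext y.2⟩
  rw [isAdditive_ITcls.eq_add_of_split (A := .of (LinearMap.ker r))
    (E := .of (LinearMap.ker (c ∘ₗ r))) (T := .of (LinearMap.ker c))
    (Submodule.inclusion_injective _) hexact hrs', ← hP_split, zero_add]

variable [IsArtinianRing Rᵐᵒᵖ]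

namespace IsSyzygyEnd

lemma apply_ITcls (hOm : IsSyzygyEnd R OmK) (hP : P.Proj) {f : P →ₗ[Rᵐᵒᵖ] M}
    (hf : Surjective f) : OmK (ITcls R M) = ITcls R (.of (LinearMap.ker f)) := by
  obtain ⟨Q, c, hc⟩ := IsProjCover.exists_cover M
  rw [hc.ITcls_ker_eq hP hf]
  exact hOm M _ ⟨Q, c, hc, ⟨LinearEquiv.refl _ _⟩⟩

lemma apply_eq_of_exact (hOm : IsSyzygyEnd R OmK) (hA : A.Proj) {i : A →ₗ[Rᵐᵒᵖ] E}
    {p : E →ₗ[Rᵐᵒᵖ] T} (hi : Injective i) (hp : Surjective p) (hip : Exact i p) :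
    OmK (ITcls R E) = OmK (ITcls R T) := by
  obtain ⟨Q, c, hc⟩ := IsProjCover.exists_cover T
  have hA' : Module.Projective Rᵐᵒᵖ A := hA
  have hQ : Module.Projective Rᵐᵒᵖ Q := hc.1
  obtain ⟨g, rfl⟩ := Module.projective_lifting_property p c hp
  obtain ⟨e⟩ := nonempty_ker_coprod_equiv_ker_comp hi hip g
  rw [hOm.apply_ITcls hc.1 hc.2.1,
    hOm.apply_ITcls (P := A.prod Q) (inferInstanceAs (Module.Projective Rᵐᵒᵖ (A × Q)))
      (coprod_surjective_of_exact hip hc.2.1)]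
  exact isAdditive_ITcls.congr e

end IsSyzygyEnd

namespace FGMod.IsAdditive

lemma exists_hom {l : FGMod R → ℕ} (hl : IsAdditive l) :
    ∃ F : ITK R →+ ℤ, ∀ ⦃M P : FGMod R⦄ ⦃f : P →ₗ[Rᵐᵒᵖ] M⦄, IsProjCover M P f →
      F (ITcls R M) = l P - l M := by
  obtain ⟨F, hF⟩ := ITK.exists_hom_of_relation (R := R)
    (r := fun M x => ∃ (P : FGMod R) (f : P →ₗ[Rᵐᵒᵖ] M), IsProjCover M P f ∧ x = (l P - l M : ℤ))
    (fun M => by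
      obtain ⟨P, f, hf⟩ := IsProjCover.exists_cover M
      exact ⟨_, P, f, hf, rfl⟩)
    (by
      rintro M _ _ ⟨P, f, hf, rfl⟩ ⟨Q, g, hg, rfl⟩
      obtain ⟨e⟩ := hf.nonempty_equiv hg
      rw [hl.congr e])
    (by
      rintro A B C _ _ e ⟨P, f, hf, rfl⟩ ⟨Q, g, hg, rfl⟩
      refine ⟨P.prod Q, _, (hf.prod hg).comp_equiv (N := A) e.symm, ?_⟩
      rw [hl e, hl (A := P.prod Q) (.refl _ _)]
      push_cast
      ring)
    (fun P hP => ⟨P, _, .id hP, (sub_self _).symm⟩)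
  exact ⟨F, fun M P f hf => hF ⟨P, f, hf, rfl⟩⟩

/-- The cover of `E` is a retract of the projective presentation `A ⊕ P(T) → E`, and comparing
lengths shows that it is all of it. -/
lemma eq_add_of_exact {l : FGMod R → ℕ} (hl : IsAdditive l) (hA : A.Proj) {i : A →ₗ[Rᵐᵒᵖ] E}
    {p : E →ₗ[Rᵐᵒᵖ] T} (hi : Injective i) (hp : Surjective p) (hip : Exact i p)
    (hF : ∀ F : ITK R →+ ℤ, F (ITcls R E) = F (ITcls R T)) : l E = l A + l T := by
  obtain ⟨P, c, hc⟩ := IsProjCover.exists_cover E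
  obtain ⟨Q, d, hd⟩ := IsProjCover.exists_cover T
  have hA' : Module.Projective Rᵐᵒᵖ A := hA
  have hQ : Module.Projective Rᵐᵒᵖ Q := hd.1
  obtain ⟨g, hg⟩ := Module.projective_lifting_property p d hp
  have hsub {m : FGMod R → ℕ} (hm : IsAdditive m) : (m P - m E : ℤ) = m Q - m T := by
    obtain ⟨F, hF'⟩ := hm.exists_hom
    rw [← hF' hc, ← hF' hd, hF F]
  have hlen : (A.prod Q).length = P.length := by
    have hE := length_eq_add_of_exact hi hp hip
    have hAQ := isAdditive_length (A := A.prod Q) (.refl _ _)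
    have := hsub isAdditive_length
    lia
  obtain ⟨r, s, -, hrs⟩ := hc.exists_retraction (Q := A.prod Q)
    (inferInstanceAs (Module.Projective Rᵐᵒᵖ (A × Q)))
    (coprod_surjective_of_exact hip (hg ▸ hd.2.1))
  have hs : Injective s := LeftInverse.injective (LinearMap.congr_fun hrs)
  have hs' : Surjective s := surjective_of_injective_of_length_le hs (by
    rw [← coe_length, ← coe_length, hlen])
  have hP : l P = l A + l Q := hl (LinearEquiv.ofBijective s ⟨hs, hs'⟩)
  have := hsub hl
  lia

end FGMod.IsAdditive

end Syzygy

section LeftApproximation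

variable {R} {M N I J P : FGMod R}

/-- A left approximation of `M` by finitely generated projectives; over a self-injective ring its
cokernel is a cosyzygy of `M`, well defined up to projective summands. -/
def IsLeftProjApprox (M I : FGMod R) (e : M →ₗ[Rᵐᵒᵖ] I) : Prop :=
  I.Proj ∧ ∀ J : FGMod R, J.Proj → ∀ g : M →ₗ[Rᵐᵒᵖ] J, ∃ a : I →ₗ[Rᵐᵒᵖ] J, a ∘ₗ e = g

/-- The cokernel of a homomorphism, as an object of `FGMod R`. -/
abbrev FGMod.coker (e : M →ₗ[Rᵐᵒᵖ] I) : FGMod R := .of (I ⧸ LinearMap.range e)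

lemma nonempty_quotient_range_prod_equiv {S : Type*} [Ring S] {M I J : Type*} [AddCommGroup M]
    [AddCommGroup I] [AddCommGroup J] [Module S M] [Module S I] [Module S J] {e : M →ₗ[S] I}
    {e' : M →ₗ[S] J} {a : I →ₗ[S] J} (ha : a ∘ₗ e = e') :
    Nonempty (((I × J) ⧸ LinearMap.range (e.prod e')) ≃ₗ[S] (I ⧸ LinearMap.range e) × J) := by
  subst ha
  let q : I × J →ₗ[S] (I ⧸ LinearMap.range e) × J :=
    (Submodule.mkQ _ ∘ₗ LinearMap.fst S I J).prod
      (LinearMap.snd S I J - a ∘ₗ LinearMap.fst S I J)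
  have hq : Surjective q := by
    rintro ⟨⟨x⟩, y⟩
    exact ⟨(x, y + a x), Prod.ext rfl (add_sub_cancel_right y (a x))⟩
  have hker : LinearMap.ker q = LinearMap.range (e.prod (a ∘ₗ e)) := by
    ext ⟨x, y⟩
    have hmem : (x, y) ∈ LinearMap.ker q ↔ x ∈ LinearMap.range e ∧ y = a x := by
      rw [← Submodule.Quotient.mk_eq_zero (LinearMap.range e), ← sub_eq_zero (a := y)]
      exact Prod.ext_iff
    rw [hmem]
    constructor
    · rintro ⟨⟨m, rfl⟩, rfl⟩
      exact ⟨m, rfl⟩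
    · rintro ⟨m, hm⟩
      obtain ⟨rfl, rfl⟩ : e m = x ∧ a (e m) = y := Prod.ext_iff.mp hm
      exact ⟨⟨m, rfl⟩, rfl⟩
  exact ⟨(Submodule.quotEquivOfEq _ _ hker.symm).trans (q.quotKerEquivOfSurjective hq)⟩

namespace IsLeftProjApprox

lemma ITcls_coker_eq {e : M →ₗ[Rᵐᵒᵖ] I} {e' : M →ₗ[Rᵐᵒᵖ] J} (he : IsLeftProjApprox M I e)
    (he' : IsLeftProjApprox M J e') : ITcls R (.coker e) = ITcls R (.coker e') := by
  obtain ⟨a, ha⟩ := he.2 J he'.1 e'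
  obtain ⟨b, hb⟩ := he'.2 I he.1 e
  obtain ⟨s⟩ := nonempty_quotient_range_prod_equiv ha
  obtain ⟨t⟩ := nonempty_quotient_range_prod_equiv hb
  have hswap : (LinearMap.range (e.prod e')).map (LinearEquiv.prodComm Rᵐᵒᵖ I J).toLinearMap
      = LinearMap.range (e'.prod e) := (LinearMap.range_comp _ _).symm
  let w := Submodule.Quotient.equiv _ _ (LinearEquiv.prodComm Rᵐᵒᵖ I J) hswap
  have hI := isAdditive_ITcls (A := .of ((I × J) ⧸ LinearMap.range (e.prod e'))) (B := .coker e) s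
  have hJ := isAdditive_ITcls (A := .of ((I × J) ⧸ LinearMap.range (e.prod e')))
    (B := .coker e') (w.trans t)
  rw [ITcls_eq_zero_of_proj he'.1, add_zero] at hI
  rw [ITcls_eq_zero_of_proj he.1, add_zero] at hJ
  rw [← hI, hJ]

lemma id (hP : P.Proj) : IsLeftProjApprox P P LinearMap.id := ⟨hP, fun _ _ g => ⟨g, rfl⟩⟩

lemma prod {e : M →ₗ[Rᵐᵒᵖ] I} {e' : N →ₗ[Rᵐᵒᵖ] J} (he : IsLeftProjApprox M I e)
    (he' : IsLeftProjApprox N J e') :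
    IsLeftProjApprox (M.prod N) (I.prod J) (e.prodMap e') := by
  have hI : Module.Projective Rᵐᵒᵖ I := he.1
  have hJ : Module.Projective Rᵐᵒᵖ J := he'.1
  refine ⟨inferInstanceAs (Module.Projective Rᵐᵒᵖ (I × J)), fun K hK g => ?_⟩
  obtain ⟨a, ha⟩ := he.2 K hK (g ∘ₗ LinearMap.inl Rᵐᵒᵖ M N)
  obtain ⟨b, hb⟩ := he'.2 K hK (g ∘ₗ LinearMap.inr Rᵐᵒᵖ M N)
  refine ⟨a.coprod b, LinearMap.prod_ext (R := Rᵐᵒᵖ) (M := M) (M₂ := N) ?_ ?_⟩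
  · refine (LinearMap.ext fun x => ?_).trans ha
    exact (congrArg (a (e x) + ·) (map_zero (b ∘ₗ e'))).trans (add_zero _)
  · refine (LinearMap.ext fun y => ?_).trans hb
    exact (congrArg (· + b (e' y)) (map_zero (a ∘ₗ e))).trans (zero_add _)

lemma comp_equiv {e : N →ₗ[Rᵐᵒᵖ] I} (he : IsLeftProjApprox N I e) (t : M ≃ₗ[Rᵐᵒᵖ] N) :
    IsLeftProjApprox M I (e ∘ₗ t.toLinearMap) := by
  refine ⟨he.1, fun J hJ g => ?_⟩
  obtain ⟨a, ha⟩ := he.2 J hJ (g ∘ₗ t.symm.toLinearMap)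
  exact ⟨a, by rw [← LinearMap.comp_assoc, ha, LinearMap.comp_assoc]; simp⟩

variable [Module.Injective Rᵐᵒᵖ Rᵐᵒᵖ]

lemma of_injective {e : M →ₗ[Rᵐᵒᵖ] I} (hI : I.Proj) (he : Injective e) :
    IsLeftProjApprox M I e := by
  refine ⟨hI, fun J hJ g => ?_⟩
  have hJ' : Module.Projective Rᵐᵒᵖ J := hJ
  have : Module.Injective Rᵐᵒᵖ J := injective_of_projective_of_finite
  exact Module.Injective.extension_property Rᵐᵒᵖ J M I e he g

variable (M) in
lemma exists_approx [IsArtinianRing Rᵐᵒᵖ] :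
    ∃ (I : FGMod R) (e : M →ₗ[Rᵐᵒᵖ] I), IsLeftProjApprox M I e := by
  let kernels : Set (Submodule Rᵐᵒᵖ M) :=
    {K | ∃ (I : FGMod R) (e : M →ₗ[Rᵐᵒᵖ] I), I.Proj ∧ K = LinearMap.ker e}
  have hne : kernels.Nonempty :=
    ⟨_, .of PUnit, 0, Module.Projective.of_free (P := PUnit.{u + 1}), rfl⟩
  obtain ⟨_, ⟨I, e, hI, rfl⟩, hmin⟩ := IsArtinian.set_has_minimal kernels hne
  refine ⟨I, e, hI, fun J hJ g => ?_⟩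
  have hI' : Module.Projective Rᵐᵒᵖ I := hI
  have hJ' : Module.Projective Rᵐᵒᵖ J := hJ
  have : Module.Injective Rᵐᵒᵖ J := injective_of_projective_of_finite
  have hnot := hmin (LinearMap.ker (e.prod g))
    ⟨I.prod J, e.prod g, inferInstanceAs (Module.Projective Rᵐᵒᵖ (I × J)), rfl⟩
  rw [LinearMap.ker_prod, inf_lt_left, not_not] at hnot
  exact exists_comp_eq_of_ker_le e g hnot

end IsLeftProjApprox

lemma nonempty_coker_prodMap_equiv (e : M →ₗ[Rᵐᵒᵖ] I) (e' : N →ₗ[Rᵐᵒᵖ] J) :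
    Nonempty (FGMod.coker (M := M.prod N) (I := I.prod J) (e.prodMap e')
      ≃ₗ[Rᵐᵒᵖ] (FGMod.coker e × FGMod.coker e' : Type u)) := by
  let q := (LinearMap.range e).mkQ.prodMap (LinearMap.range e').mkQ
  have hq : Surjective q := (Submodule.mkQ_surjective _).prodMap (Submodule.mkQ_surjective _)
  have hker : LinearMap.range (e.prodMap e') = LinearMap.ker q := by
    rw [LinearMap.ker_prodMap, Submodule.ker_mkQ, Submodule.ker_mkQ, LinearMap.range_prodMap]
  exact ⟨(Submodule.quotEquivOfEq _ _ hker).trans (q.quotKerEquivOfSurjective hq)⟩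

lemma nonempty_coker_subtype_ker_equiv [IsNoetherianRing Rᵐᵒᵖ] {f : P →ₗ[Rᵐᵒᵖ] M}
    (hf : Surjective f) :
    Nonempty (FGMod.coker (M := .of (LinearMap.ker f)) (LinearMap.ker f).subtype ≃ₗ[Rᵐᵒᵖ] M) :=
  ⟨(Submodule.quotEquivOfEq _ _ (Submodule.range_subtype _)).trans (f.quotKerEquivOfSurjective hf)⟩

variable [IsArtinianRing Rᵐᵒᵖ] [Module.Injective Rᵐᵒᵖ Rᵐᵒᵖ]

lemma exists_cosyzygy_hom : ∃ Θ : ITK R →+ ITK R, ∀ ⦃M I : FGMod R⦄ ⦃e : M →ₗ[Rᵐᵒᵖ] I⦄,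
    IsLeftProjApprox M I e → Θ (ITcls R M) = ITcls R (.coker e) := by
  obtain ⟨Θ, hΘ⟩ := ITK.exists_hom_of_relation (R := R)
    (r := fun M x => ∃ (I : FGMod R) (e : M →ₗ[Rᵐᵒᵖ] I),
      IsLeftProjApprox M I e ∧ x = ITcls R (.coker e))
    (fun M => by
      obtain ⟨I, e, he⟩ := IsLeftProjApprox.exists_approx M
      exact ⟨_, I, e, he, rfl⟩)
    (by
      rintro M _ _ ⟨I, e, he, rfl⟩ ⟨J, e', he', rfl⟩
      exact he.ITcls_coker_eq he')
    (by
      rintro A B C _ _ t ⟨I, e, he, rfl⟩ ⟨J, e', he', rfl⟩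
      refine ⟨I.prod J, _, (he.prod he').comp_equiv (M := A) t, ?_⟩
      obtain ⟨w⟩ := nonempty_coker_prodMap_equiv e e'
      rw [← isAdditive_ITcls w]
      refine isAdditive_ITcls.congr (Submodule.quotEquivOfEq _ _ ?_)
      exact (LinearMap.range_comp_of_range_eq_top _ t.range).symm)
    (fun P hP => by
      have : Subsingleton (P ⧸ LinearMap.range (LinearMap.id : P →ₗ[Rᵐᵒᵖ] P)) := by
        rw [Submodule.Quotient.subsingleton_iff, LinearMap.range_id]
      exact ⟨P, _, .id hP, (ITcls_eq_zero_of_subsingleton _).symm⟩)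
  exact ⟨Θ, fun M I e he => hΘ ⟨I, e, he, rfl⟩⟩

lemma IsSyzygyEnd.injective {OmK : AddMonoid.End (ITK R)} (hOm : IsSyzygyEnd R OmK) :
    Injective OmK := by
  obtain ⟨Θ, hΘ⟩ := exists_cosyzygy_hom (R := R)
  have hleft : Θ.comp OmK = AddMonoidHom.id (ITK R) := ITK.hom_ext fun M => by
    obtain ⟨P, f, hf⟩ := IsProjCover.exists_cover M
    have happrox : IsLeftProjApprox (.of (LinearMap.ker f)) P (LinearMap.ker f).subtype :=
      .of_injective hf.1 (LinearMap.ker f).subtype_injective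
    obtain ⟨w⟩ := nonempty_coker_subtype_ker_equiv hf.2.1
    change Θ (OmK (ITcls R M)) = ITcls R M
    rw [hOm.apply_ITcls hf.1 hf.2.1, hΘ happrox]
    exact isAdditive_ITcls.congr w
  exact LeftInverse.injective (DFunLike.congr_fun hleft)

end LeftApproximation

section IndecomposableSummands

variable {R} {A B L M N : FGMod R}

namespace FGMod

lemma isSummand_iff_exists_retraction : N.IsSummand M ↔
    ∃ (i : N →ₗ[Rᵐᵒᵖ] M) (p : M →ₗ[Rᵐᵒᵖ] N), p ∘ₗ i = LinearMap.id := by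
  constructor
  · rintro ⟨U, V, hUV, ⟨e⟩⟩
    refine ⟨U.subtype ∘ₗ e.toLinearMap, e.symm.toLinearMap ∘ₗ U.projectionOnto V hUV, ?_⟩
    ext x
    simp
  · rintro ⟨i, p, hpi⟩
    let e := LinearEquiv.ofInjective i (LeftInverse.injective (LinearMap.congr_fun hpi))
    refine ⟨_, _, LinearMap.isCompl_of_proj (f := e.toLinearMap ∘ₗ p) ?_, ⟨e⟩⟩
    rintro ⟨_, x, rfl⟩
    exact congrArg e (LinearMap.congr_fun hpi x)

lemma IsSummand.refl (M : FGMod R) : M.IsSummand M :=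
  isSummand_iff_exists_retraction.mpr ⟨LinearMap.id, LinearMap.id, rfl⟩

lemma IsSummand.trans (hLN : L.IsSummand N) (hNM : N.IsSummand M) : L.IsSummand M := by
  obtain ⟨i, p, hpi⟩ := isSummand_iff_exists_retraction.mp hLN
  obtain ⟨j, q, hqj⟩ := isSummand_iff_exists_retraction.mp hNM
  refine isSummand_iff_exists_retraction.mpr ⟨j ∘ₗ i, p ∘ₗ q, ?_⟩
  rw [LinearMap.comp_assoc, ← LinearMap.comp_assoc i j q, hqj, LinearMap.id_comp, hpi]

lemma isSummand_left_of_equiv_prod (e : M ≃ₗ[Rᵐᵒᵖ] (A × B : Type u)) : A.IsSummand M :=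
  isSummand_iff_exists_retraction.mpr ⟨e.symm.toLinearMap ∘ₗ LinearMap.inl _ _ _,
    LinearMap.fst _ _ _ ∘ₗ e.toLinearMap, by ext; simp⟩

lemma isSummand_right_of_equiv_prod (e : M ≃ₗ[Rᵐᵒᵖ] (A × B : Type u)) : B.IsSummand M :=
  isSummand_iff_exists_retraction.mpr ⟨e.symm.toLinearMap ∘ₗ LinearMap.inr _ _ _,
    LinearMap.snd _ _ _ ∘ₗ e.toLinearMap, by ext; simp⟩

lemma not_isSummand_of_subsingleton [Nontrivial N] [Subsingleton M] : ¬N.IsSummand M := by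
  rw [isSummand_iff_exists_retraction]
  rintro ⟨i, p, hpi⟩
  have hi : Injective i := LeftInverse.injective (LinearMap.congr_fun hpi)
  exact not_subsingleton N hi.subsingleton

lemma Indec.nonempty_equiv_of_isSummand (hM : M.Indec) [Nontrivial N] (h : N.IsSummand M) :
    Nonempty (N ≃ₗ[Rᵐᵒᵖ] M) := by
  obtain ⟨U, V, hUV, ⟨e⟩⟩ := h
  obtain rfl | rfl := hM.2 U V hUV
  · exact absurd e.injective.subsingleton (not_subsingleton N)
  · obtain rfl : U = ⊤ := by simpa only [sup_bot_eq] using hUV.sup_eq_top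
    exact ⟨e.trans Submodule.topEquiv⟩

lemma isSummand_of_isUnit (i : N →ₗ[Rᵐᵒᵖ] A) (p : A →ₗ[Rᵐᵒᵖ] N)
    (h : IsUnit (p ∘ₗ i : Module.End Rᵐᵒᵖ N)) : N.IsSummand A := by
  obtain ⟨v, hv⟩ := h.exists_left_inv
  exact isSummand_iff_exists_retraction.mpr ⟨i, v ∘ₗ p, hv⟩

variable [IsArtinianRing Rᵐᵒᵖ]

lemma Indec.isUnit_or_isNilpotent (hN : N.Indec) (f : Module.End Rᵐᵒᵖ N) :
    IsUnit f ∨ IsNilpotent f := by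
  obtain ⟨n, hn⟩ := Filter.eventually_atTop.mp (LinearMap.eventually_isCompl_ker_pow_range_pow f)
  obtain hker | hrange := hN.2 _ _ (hn (n + 1) n.le_succ)
  · have hf : LinearMap.ker f = ⊥ := by
      rw [eq_bot_iff, ← hker, pow_succ]
      exact LinearMap.ker_le_ker_comp f (f ^ n)
    exact Or.inl ((Module.End.isUnit_iff f).mpr
      (IsArtinian.bijective_of_injective_endomorphism f (LinearMap.ker_eq_bot.mp hf)))
  · exact Or.inr ⟨n + 1, LinearMap.range_eq_bot.mp hrange⟩

/-- The two composites `N → A → N` and `N → B → N` sum to the identity, and by Fitting's lemma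
one of them is a unit. -/
lemma Indec.isSummand_or_isSummand (hN : N.Indec) (e : M ≃ₗ[Rᵐᵒᵖ] (A × B : Type u))
    (h : N.IsSummand M) : N.IsSummand A ∨ N.IsSummand B := by
  obtain ⟨i, p, hpi⟩ := isSummand_iff_exists_retraction.mp h
  let i' : N →ₗ[Rᵐᵒᵖ] (A × B : Type u) := e.toLinearMap ∘ₗ i
  let p' : (A × B : Type u) →ₗ[Rᵐᵒᵖ] N := p ∘ₗ e.symm.toLinearMap
  let fA : Module.End Rᵐᵒᵖ N := (p' ∘ₗ LinearMap.inl _ _ _) ∘ₗ (LinearMap.fst _ _ _ ∘ₗ i')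
  let fB : Module.End Rᵐᵒᵖ N := (p' ∘ₗ LinearMap.inr _ _ _) ∘ₗ (LinearMap.snd _ _ _ ∘ₗ i')
  have hsum : fA + fB = 1 := LinearMap.ext fun x => by
    have hx : p' (i' x) = x := by
      simpa only [p', i', LinearMap.comp_apply, LinearEquiv.coe_coe, e.symm_apply_apply,
        LinearMap.id_apply] using LinearMap.congr_fun hpi x
    simpa [fA, fB, ← map_add] using hx
  obtain hu | hnil := hN.isUnit_or_isNilpotent fA
  · exact Or.inl (isSummand_of_isUnit _ _ hu)
  · have hfB : IsUnit fB := by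
      rw [eq_sub_of_add_eq' hsum]
      exact hnil.isUnit_one_sub
    exact Or.inr (isSummand_of_isUnit _ _ hfB)

lemma induction_on_indec {motive : FGMod R → Prop} (M : FGMod R)
    (subsingleton : ∀ (M : FGMod R) [Subsingleton M], motive M)
    (indec : ∀ M : FGMod R, M.Indec → motive M)
    (prod : ∀ M A B : FGMod R, (M ≃ₗ[Rᵐᵒᵖ] (A × B : Type u)) → motive A → motive B → motive M) :
    motive M := by
  induction hn : M.length using Nat.strong_induction_on generalizing M with
  | _ n ih =>
    obtain hM | hM := subsingleton_or_nontrivial M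
    · exact subsingleton M
    by_cases hM' : M.Indec
    · exact indec M hM'
    obtain ⟨U, V, hUV, hU, hV⟩ : ∃ U V : Submodule Rᵐᵒᵖ M, IsCompl U V ∧ U ≠ ⊥ ∧ V ≠ ⊥ := by
      simpa only [Indec, hM, true_and, not_forall, not_or, exists_prop] using hM'
    have hU' : U ≠ ⊤ := fun h => hV (eq_bot_of_top_isCompl (h ▸ hUV))
    have hV' : V ≠ ⊤ := fun h => hU (eq_bot_of_isCompl_top (h ▸ hUV))
    exact prod M (.of U) (.of V) (Submodule.prodEquivOfIsCompl U V hUV).symm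
      (ih _ (hn ▸ length_lt hU') _ rfl) (ih _ (hn ▸ length_lt hV') _ rfl)

lemma finite_ITcls_indec_summands (M : FGMod R) :
    {x | ∃ N : FGMod R, N.IsSummand M ∧ N.Indec ∧ x = ITcls R N}.Finite := by
  induction M using induction_on_indec with
  | subsingleton M =>
    refine Set.finite_empty.subset ?_
    rintro _ ⟨N, hNM, ⟨_, -⟩, -⟩
    exact not_isSummand_of_subsingleton hNM
  | indec M hM =>
    refine (Set.finite_singleton (ITcls R M)).subset ?_
    rintro _ ⟨N, hNM, ⟨_, -⟩, rfl⟩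
    obtain ⟨e⟩ := hM.nonempty_equiv_of_isSummand hNM
    exact isAdditive_ITcls.congr e
  | prod M A B e hA hB =>
    refine (hA.union hB).subset ?_
    rintro _ ⟨N, hNM, hN, rfl⟩
    exact (hN.isSummand_or_isSummand e hNM).imp (⟨N, ·, hN, rfl⟩) (⟨N, ·, hN, rfl⟩)

end FGMod

lemma ITgen_mono (h : N.IsSummand M) : ITgen R N ≤ ITgen R M := by
  refine AddSubgroup.closure_mono ?_
  rintro _ ⟨L, hLN, hL, hL', rfl⟩
  exact ⟨L, hLN.trans h, hL, hL', rfl⟩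

variable [IsArtinianRing Rᵐᵒᵖ]

lemma ITcls_mem_ITgen (M : FGMod R) : ITcls R M ∈ ITgen R M := by
  induction M using FGMod.induction_on_indec with
  | subsingleton M => exact ITcls_eq_zero_of_subsingleton M ▸ zero_mem _
  | indec M hM =>
    by_cases hP : M.Proj
    · exact ITcls_eq_zero_of_proj hP ▸ zero_mem _
    · exact AddSubgroup.subset_closure ⟨M, .refl M, hM, hP, rfl⟩
  | prod M A B e hA hB =>
    rw [isAdditive_ITcls e]
    exact add_mem (ITgen_mono (FGMod.isSummand_left_of_equiv_prod e) hA)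
      (ITgen_mono (FGMod.isSummand_right_of_equiv_prod e) hB)

instance finite_ITgen (M : FGMod R) :
    Module.Finite ℤ (AddSubgroup.toIntSubmodule (ITgen R M)) := by
  rw [Module.Finite.iff_fg, Submodule.fg_iff_addSubgroup_fg,
    AddSubgroup.toIntSubmodule_toAddSubgroup, AddSubgroup.fg_iff]
  refine ⟨_, rfl, (FGMod.finite_ITcls_indec_summands M).subset ?_⟩
  rintro _ ⟨N, hNM, hN, -, rfl⟩
  exact ⟨N, hNM, hN, rfl⟩

end IndecomposableSummands

section Phi

lemma smul_eq_zero_of_finrank_map_eq {S G H : Type*} [CommRing S] [IsDomain S]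
    [IsNoetherianRing S] [AddCommGroup G] [AddCommGroup H] [Module S G] [Module S H]
    (V : Submodule S G) [Module.Finite S V] {f : G →ₗ[S] H}
    (hrank : Module.finrank S (V.map f) = Module.finrank S V) {x : G} (hxV : x ∈ V)
    (hx : f x = 0) : ∃ c : S, c ≠ 0 ∧ c • x = 0 := by
  have hker : Module.finrank S (LinearMap.ker (f ∘ₗ V.subtype)) = 0 := by
    have h := Submodule.finrank_quotient_add_finrank (LinearMap.ker (f ∘ₗ V.subtype))
    rw [(f ∘ₗ V.subtype).quotKerEquivRange.finrank_eq, LinearMap.range_comp,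
      Submodule.range_subtype, hrank] at h
    exact Nat.add_eq_left.mp h
  obtain ⟨c, hc, hcx⟩ := Module.finrank_eq_zero_iff.mp hker ⟨⟨x, hxV⟩, hx⟩
  exact ⟨c, hc, congrArg (fun z : LinearMap.ker (f ∘ₗ V.subtype) => (z : G)) hcx⟩

variable {R} {OmK : AddMonoid.End (ITK R)}

lemma rkIT_map_of_injective {f : ITK R →+ ITK R} (hf : Injective f) (H : AddSubgroup (ITK R)) :
    rkIT R (H.map f) = rkIT R H :=
  (LinearEquiv.finrank_eq (H.equivMapOfInjective f hf).toIntLinearEquiv).symm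

lemma rkIT_map_le (f : ITK R →+ ITK R) (H : AddSubgroup (ITK R))
    [Module.Finite ℤ (AddSubgroup.toIntSubmodule H)] : rkIT R (H.map f) ≤ rkIT R H := by
  rw [rkIT, ← AddMonoidHom.coe_toIntLinearMap_map]
  exact Submodule.finrank_map_le _ _

lemma phiIT_eq_zero_of_injective (hOm : Injective OmK) (M : FGMod R) : phiIT R OmK M = 0 := by
  have hpow (i : ℕ) : Injective ((OmK ^ i : AddMonoid.End (ITK R)) : ITK R →+ ITK R) := by
    rw [AddMonoid.End.coe_pow]
    exact hOm.iterate i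
  refine Nat.sInf_eq_zero.mpr (Or.inl fun i _ => ?_)
  rw [rkIT_map_of_injective (hpow i), rkIT_map_of_injective (hpow 0)]

variable [IsArtinianRing Rᵐᵒᵖ] {M : FGMod R}

/-- `φ(M)` is the infimum of a nonempty set, because the ranks of `Ω^i⟨M⟩` decrease. -/
lemma rkIT_map_ITgen_of_phiIT_eq_zero (hphi : phiIT R OmK M = 0) :
    rkIT R ((ITgen R M).map (OmK : ITK R →+ ITK R)) = rkIT R (ITgen R M) := by
  let H (i : ℕ) : AddSubgroup (ITK R) :=
    (ITgen R M).map ((OmK ^ i : AddMonoid.End (ITK R)) : ITK R →+ ITK R)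
  have hzero : H 0 = ITgen R M := AddSubgroup.map_id _
  have hsucc (i : ℕ) : H (i + 1) = (H i).map (OmK : ITK R →+ ITK R) := by
    simp only [H, pow_succ']
    exact (AddSubgroup.map_map _ _ _).symm
  have hfinite (i : ℕ) : Module.Finite ℤ (AddSubgroup.toIntSubmodule (H i)) :=
    inferInstanceAs (Module.Finite ℤ ((AddSubgroup.toIntSubmodule (ITgen R M)).map
      (AddMonoidHom.toIntLinearMap (OmK ^ i : AddMonoid.End (ITK R)))))
  have hanti : Antitone fun i => rkIT R (H i) := antitone_nat_of_succ_le fun i => by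
    rw [hsucc]
    exact rkIT_map_le _ _
  obtain ⟨n, hn⟩ := WellFoundedLT.antitone_chain_condition hanti
  have hmem := Nat.sInf_mem (s := {n | ∀ i, n ≤ i → rkIT R (H i) = rkIT R (H n)})
    ⟨n, fun i hi => (hn i hi).symm⟩
  have hconst : ∀ i, 0 ≤ i → rkIT R (H i) = rkIT R (H 0) := hphi ▸ hmem
  have h := hconst 1 zero_le_one
  rwa [hsucc 0, hzero] at h

lemma map_eq_zero_of_phiIT_eq_zero (hphi : phiIT R OmK M = 0) {x : ITK R}
    (hx : x ∈ ITgen R M) (hOx : OmK x = 0) (F : ITK R →+ ℤ) : F x = 0 := by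
  obtain ⟨c, hc, hcx⟩ := smul_eq_zero_of_finrank_map_eq (AddSubgroup.toIntSubmodule (ITgen R M))
    (f := AddMonoidHom.toIntLinearMap OmK) (rkIT_map_ITgen_of_phiIT_eq_zero hphi) hx hOx
  have hF : c • F x = 0 := by rw [← map_zsmul, hcx, map_zero]
  exact (smul_eq_zero.mp hF).resolve_left hc

/-- If the extension did not split, the socle of `E` would lie in that of `A`, while additivity
of the socle length makes it longer by one. -/
lemma exists_section_of_phiIT_eq_zero (hOm : IsSyzygyEnd R OmK) {A E T : FGMod R}
    [IsSimpleModule Rᵐᵒᵖ T] (hphi : phiIT R OmK (E.prod T) = 0) (hA : A.Proj)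
    {i : A →ₗ[Rᵐᵒᵖ] E} {p : E →ₗ[Rᵐᵒᵖ] T} (hi : Injective i) (hp : Surjective p)
    (hip : Exact i p) : ∃ s : T →ₗ[Rᵐᵒᵖ] E, p ∘ₗ s = LinearMap.id := by
  by_contra hsplit
  have hmem : ITcls R E - ITcls R T ∈ ITgen R (E.prod T) :=
    sub_mem (ITgen_mono (FGMod.isSummand_left_of_equiv_prod (.refl _ _)) (ITcls_mem_ITgen E))
      (ITgen_mono (FGMod.isSummand_right_of_equiv_prod (.refl _ _)) (ITcls_mem_ITgen T))
  have hΩ : OmK (ITcls R E - ITcls R T) = 0 := by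
    rw [map_sub, hOm.apply_eq_of_exact hA hi hp hip, sub_self]
  have hF (F : ITK R →+ ℤ) : F (ITcls R E) = F (ITcls R T) := by
    rw [← sub_eq_zero, ← map_sub, map_eq_zero_of_phiIT_eq_zero hphi hmem hΩ]
  have hadd : E.socleLength = A.socleLength + T.socleLength :=
    FGMod.isAdditive_socleLength.eq_add_of_exact hA hi hp hip hF
  rw [FGMod.socleLength_eq_one (T := T)] at hadd
  have hle := FGMod.socleLength_le_of_not_split hi hip hsplit
  lia

lemma injective_of_phiIT_eq_zero (hOm : IsSyzygyEnd R OmK)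
    (hphi : ∀ M : FGMod R, phiIT R OmK M = 0) : Module.Injective Rᵐᵒᵖ Rᵐᵒᵖ := by
  refine injective_of_extensionsSplit_simple fun T _ _ _ E _ _ i p hi hp hip => ?_
  have hE : Module.Finite Rᵐᵒᵖ E := Module.Finite.of_exact hip hp
  exact exists_section_of_phiIT_eq_zero (A := .of Rᵐᵒᵖ) (E := .of E) (T := .of T) hOm (hphi _)
    (Module.Projective.of_free (P := Rᵐᵒᵖ)) hi hp hip

end Phi

/-- A right artinian ring `R` is right self-injective iff `φ(M) = 0`
for every f.g. right `R`-module `M`. -/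
theorem selfinjective_iff_phidim_eq_zero (R : Type u) [Ring R] [IsArtinianRing Rᵐᵒᵖ]
    (OmK : AddMonoid.End (ITK R)) (hOm : IsSyzygyEnd R OmK) :
    Module.Injective Rᵐᵒᵖ Rᵐᵒᵖ ↔ ∀ M : FGMod R, phiIT R OmK M = 0 := by
  constructor
  · intro hR M
    exact phiIT_eq_zero_of_injective hOm.injective M
  · intro hphi
    exact injective_of_phiIT_eq_zero hOm hphi
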